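/- Let q = 2^n, let k be odd with k ≥ 3 and gcd(k,n) = 1, and let f(x) = x^{2^k+1} + a x^{2^{k-1}+2} + a^2 x^3 with a ∈ F_q, a ≠ 0. Then either φ_f is irreducible over an algebraic closure of F_q, or φ_f = P·Q where P, Q ∈ F_q[x,y,z] are each absolutely irreducible. -/

import Mathlib

open MvPolynomial

/-- The polynomial `(x+y)(x+z)(y+z)` in `F[x,y,z]`. -/
noncomputable def e3 (F : Type*) [CommRing F] : MvPolynomial (Fin 3) F :=
  (X 0 + X 1) * (X 0 + X 2) * (X 1 + X 2)

/-- The polynomial `f(x) + f(y) + f(z) + f(x+y+z)` in `F[x,y,z]`. -/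
noncomputable def fsum {F : Type*} [CommRing F] (f : Polynomial F) :
    MvPolynomial (Fin 3) F :=
  Polynomial.aeval (X 0 : MvPolynomial (Fin 3) F) f +
    Polynomial.aeval (X 1 : MvPolynomial (Fin 3) F) f +
    Polynomial.aeval (X 2 : MvPolynomial (Fin 3) F) f +
    Polynomial.aeval (X 0 + X 1 + X 2 : MvPolynomial (Fin 3) F) f

/-!
The substitution `x = 0`, `y = t * T`, `z = T` turns `φ` into the trinomial
`h * T ^ (2 * m) + a * g * T ^ m + a ^ 2` over `K[t]`, where `m = 2 ^ (k - 1) - 1`,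
`h = (t ^ (2 ^ k) + t) / (t ^ 2 + t)` and `g = (t ^ (2 ^ (k - 1)) + t ^ 2) / (t ^ 2 + t)`. Here `h`
is separable of degree `2 * m` and coprime to `g`.

In the image of a polynomial in `x, y, z` the coefficient of `T ^ i` has degree at most `i`. The
leading coefficients of the images of two factors of `φ` have product `h`, so each has the largest
degree that this bound allows, strictly above that of every other coefficient. Comparing
coefficients from the top and using that these leading coefficients are coprime, all coefficients
strictly between the top one and the one `m` places below it vanish. Hence either one leading
coefficient is a unit, and that factor is constant, or both factors have degree `m` and
`r + s = a * g`, `r * s = a ^ 2 * h` for some `r, s` in `K[t]`. Since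
`h = (t ^ 2 + t) * g ^ 2 + (t ^ 2 + t + 1)`, the shifts `u = r + a * g * t` and `v = s + a * g * t`
satisfy `u + v = a * g` and `u * v = a ^ 2 * (t ^ 2 + t + 1)`. So `g` has degree at most two, which
leaves only `k = 3`, where `φ` is a product of two explicit cubics.
-/

section Degree

variable {R σ : Type*}

theorem totalDegree_aeval_polynomial_le [CommSemiring R] (u : MvPolynomial σ R)
    (f : Polynomial R) : (Polynomial.aeval u f).totalDegree ≤ f.natDegree * u.totalDegree := by
  rw [Polynomial.aeval_eq_sum_range]
  refine totalDegree_finsetSum_le fun i hi ↦ ?_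
  calc (f.coeff i • u ^ i).totalDegree
      ≤ i * u.totalDegree := (totalDegree_smul_le _ _).trans (totalDegree_pow u i)
    _ ≤ f.natDegree * u.totalDegree :=
      Nat.mul_le_mul_right _ (Nat.lt_succ_iff.mp (Finset.mem_range.mp hi))

theorem isUnit_of_totalDegree_eq_zero [Field R] {P : MvPolynomial σ R} (hP : P ≠ 0)
    (hdeg : P.totalDegree = 0) : IsUnit P := by
  have hC : P = C (P.coeff 0) := totalDegree_eq_zero_iff_eq_C.mp hdeg
  have hunit : IsUnit (P.coeff 0) := isUnit_iff_ne_zero.mpr fun h ↦ hP (by rw [hC, h, C_0])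
  exact isUnit_iff_totalDegree_of_isReduced.mpr ⟨hunit, hdeg⟩

theorem irreducible_of_totalDegree_of_dvd [Field R] {P : MvPolynomial σ R}
    (hdeg : P.totalDegree ≠ 0)
    (hdvd : ∀ Q, Q ∣ P → Q.totalDegree = 0 ∨ Q.totalDegree = P.totalDegree) :
    Irreducible P := by
  have hP : P ≠ 0 := by rintro rfl; exact hdeg totalDegree_zero
  refine ⟨fun hu ↦ hdeg (isUnit_iff_totalDegree_of_isReduced.mp hu).2, ?_⟩
  rintro Q S rfl
  obtain ⟨hQ, hS⟩ := mul_ne_zero_iff.mp hP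
  have hadd := totalDegree_mul_of_isDomain hQ hS
  rcases hdvd Q (dvd_mul_right Q S) with h | h
  · exact .inl (isUnit_of_totalDegree_eq_zero hQ h)
  · exact .inr (isUnit_of_totalDegree_eq_zero hS (by omega))

end Degree

section PolynomialNotation

open Polynomial

local notation "X" => Polynomial.X
local notation "C" => Polynomial.C

section Ray

variable {σ R A : Type*}

/-- The polynomial `P(T • v)` in the single variable `T`: its coefficient of `T ^ i` is the value
at `v` of the homogeneous component of degree `i` of `P`. -/
noncomputable def aevalRay [CommSemiring R] [CommSemiring A] [Algebra R A] (v : σ → A) :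
    MvPolynomial σ R →ₐ[R] A[X] :=
  MvPolynomial.aeval fun i ↦ C (v i) * X

section CommSemiring

variable [CommSemiring R] [CommSemiring A] [Algebra R A] (v : σ → A)

@[simp]
theorem aevalRay_X (i : σ) : aevalRay (R := R) v (MvPolynomial.X i) = C (v i) * X := by
  simp [aevalRay]

theorem coeff_aevalRay (P : MvPolynomial σ R) (i : ℕ) :
    (aevalRay v P).coeff i = MvPolynomial.aeval v (homogeneousComponent i P) := by
  induction P using MvPolynomial.induction_on' with
  | monomial d c =>
    have hray : aevalRay v (monomial d c) =
        C (MvPolynomial.aeval v (monomial d c)) * X ^ d.degree := by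
      simp [aevalRay, MvPolynomial.aeval_monomial, Finsupp.prod, Finsupp.degree_apply, mul_pow,
        Finset.prod_mul_distrib, Finset.prod_pow_eq_pow_sum, mul_assoc]
    rw [hray, coeff_C_mul_X_pow, homogeneousComponent_of_mem (isHomogeneous_monomial c rfl)]
    split_ifs <;> simp
  | add P Q hP hQ => simp only [map_add, Polynomial.coeff_add, hP, hQ]

theorem natDegree_aevalRay_le (P : MvPolynomial σ R) :
    (aevalRay v P).natDegree ≤ P.totalDegree := by
  refine natDegree_le_iff_coeff_eq_zero.mpr fun i hi ↦ ?_
  rw [coeff_aevalRay, homogeneousComponent_eq_zero i P hi, map_zero]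

end CommSemiring

theorem natDegree_aevalRay_of_dvd [CommRing R] [IsDomain R] [CommRing A] [IsDomain A]
    [Algebra R A] {v : σ → A} {P Q : MvPolynomial σ R} (hQ : aevalRay v Q ≠ 0)
    (hdeg : Q.totalDegree ≤ (aevalRay v Q).natDegree) (hdvd : P ∣ Q) :
    (aevalRay v P).natDegree = P.totalDegree := by
  obtain ⟨S, rfl⟩ := hdvd
  have hPS : P * S ≠ 0 := fun h ↦ hQ (by rw [h, map_zero])
  rw [map_mul] at hQ hdeg
  rw [totalDegree_mul_of_isDomain (left_ne_zero_of_mul hPS) (right_ne_zero_of_mul hPS),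
    natDegree_mul (left_ne_zero_of_mul hQ) (right_ne_zero_of_mul hQ)] at hdeg
  have := natDegree_aevalRay_le v P
  have := natDegree_aevalRay_le v S
  omega

end Ray

section Trinomial

theorem coeff_mul_of_coeff_eq_zero {R : Type*} [Semiring R] {P : R[X]} (Q : R[X]) {n : ℕ}
    (hn : n ≠ 0) (hP : ∀ i ≠ 0, i < n → P.coeff i = 0) :
    (P * Q).coeff n = P.coeff 0 * Q.coeff n + P.coeff n * Q.coeff 0 := by
  rw [Polynomial.coeff_mul]
  refine Finset.sum_eq_add (0, n) (n, 0) (by simp [hn.symm]) ?_ (by simp) (by simp)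
  rintro ⟨i, j⟩ hij ⟨hi, hj⟩
  rw [Finset.HasAntidiagonal.mem_antidiagonal] at hij
  rw [hP i (by grind) (by grind), zero_mul]

variable {R : Type*} [CommRing R] [IsDomain R]

theorem coeff_eq_zero_of_coeff_mul_eq_zero {P Q : R[X][X]} {m : ℕ}
    (hcop : IsCoprime (P.coeff 0) (Q.coeff 0))
    (hdeg : ∀ i ≠ 0, (P.coeff i).degree < (P.coeff 0).degree)
    (hPQ : ∀ i ≠ 0, i < m → (P * Q).coeff i = 0) {n : ℕ} (hn : n ≠ 0) (hnm : n < m) :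
    P.coeff n = 0 := by
  induction n using Nat.strong_induction_on with
  | _ n ih =>
    have hsum : P.coeff 0 * Q.coeff n + P.coeff n * Q.coeff 0 = 0 := by
      rw [← coeff_mul_of_coeff_eq_zero Q hn fun i hi hin ↦ ih i hin hi (hin.trans hnm),
        hPQ n hn hnm]
    have hdvd : P.coeff 0 ∣ P.coeff n * Q.coeff 0 :=
      ⟨-Q.coeff n, by linear_combination hsum⟩
    exact eq_zero_of_dvd_of_degree_lt (hcop.dvd_of_dvd_mul_right hdvd) (hdeg n hn)

theorem isUnit_coeff_zero_or_of_mul_eq_trinomial {P Q : R[X][X]} {h g c : R[X]} {m : ℕ}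
    (hm : 0 < m) (hsep : h.Separable) (hhg : IsCoprime h g)
    (hdeg : ∀ i ≠ 0, (P.coeff i).degree < (P.coeff 0).degree)
    (hPQ : P * Q = trinomial 0 m (2 * m) h g c) :
    IsUnit (P.coeff 0) ∨ IsUnit (Q.coeff 0) ∨
      (m ≤ P.natDegree ∧ m ≤ Q.natDegree ∧ ∃ r s : R[X], r + s = g ∧ r * s = h * c) := by
  have hm2 : m < 2 * m := by omega
  have hzero : P.coeff 0 * Q.coeff 0 = h := by
    rw [← mul_coeff_zero, hPQ, trinomial_trailing_coeff' hm hm2]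
  have hvanish : ∀ i ≠ 0, i < m → P.coeff i = 0 := fun i hi him ↦
    coeff_eq_zero_of_coeff_mul_eq_zero (hzero ▸ hsep).isCoprime hdeg
      (fun j hj hjm ↦ by
        simp [hPQ, trinomial_def, Polynomial.coeff_X_pow, Polynomial.coeff_C_of_ne_zero hj,
          hjm.ne, (hjm.trans hm2).ne])
      hi him
  have hmid : P.coeff 0 * Q.coeff m + P.coeff m * Q.coeff 0 = g := by
    rw [← coeff_mul_of_coeff_eq_zero Q hm.ne' hvanish, hPQ, trinomial_middle_coeff hm hm2]
  by_cases hPm : P.coeff m = 0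
  · refine .inl (hhg.isUnit_of_dvd' (Dvd.intro _ hzero) ⟨Q.coeff m, ?_⟩)
    rw [← hmid, hPm, zero_mul, add_zero]
  by_cases hQm : Q.coeff m = 0
  · refine .inr (.inl (hhg.isUnit_of_dvd' (Dvd.intro_left _ hzero) ⟨P.coeff m, ?_⟩))
    rw [← hmid, hQm, mul_zero, zero_add, mul_comm]
  have hPle := le_natDegree_of_ne_zero hPm
  have hQle := le_natDegree_of_ne_zero hQm
  have hsum : P.natDegree + Q.natDegree ≤ 2 * m := by
    rw [← natDegree_mul (by rintro rfl; simp at hPm) (by rintro rfl; simp at hQm), hPQ,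
      trinomial_def]
    compute_degree
    omega
  have htop : P.coeff m * Q.coeff m = c := by
    rw [← coeff_mul_add_eq_of_natDegree_le (by omega : P.natDegree ≤ m)
      (by omega : Q.natDegree ≤ m), hPQ, ← two_mul, trinomial_leading_coeff' hm hm2]
  exact .inr (.inr ⟨hPle, hQle, P.coeff 0 * Q.coeff m, P.coeff m * Q.coeff 0, hmid, by
    rw [← hzero, ← htop]; ring⟩)

theorem reverse_trinomial {S : Type*} [Semiring S] {m : ℕ} (hm : 0 < m) {u v w : S} (hw : w ≠ 0) :
    (trinomial 0 m (2 * m) u v w).reverse = trinomial 0 m (2 * m) w v u := by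
  have hm2 : m < 2 * m := by omega
  rw [reverse, trinomial_natDegree hm hm2 hw]
  simp only [trinomial_def, reflect_add, reflect_C_mul_X_pow, revAt_le hm2.le, revAt_le le_rfl,
    revAt_le (Nat.zero_le (2 * m)), Nat.sub_self, Nat.sub_zero, (by omega : 2 * m - m = m)]
  abel

theorem natDegree_leadingCoeff_of_mul {p q : R[X][X]}
    (hp : ∀ i, (p.coeff i).natDegree ≤ i) (hq : ∀ i, (q.coeff i).natDegree ≤ i)
    (hpq0 : p * q ≠ 0) (hpq : (p * q).leadingCoeff.natDegree = (p * q).natDegree) :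
    p.leadingCoeff.natDegree = p.natDegree := by
  obtain ⟨hp0, hq0⟩ := mul_ne_zero_iff.mp hpq0
  rw [leadingCoeff_mul, natDegree_mul hp0 hq0, natDegree_mul (leadingCoeff_ne_zero.mpr hp0)
    (leadingCoeff_ne_zero.mpr hq0)] at hpq
  have hple : p.leadingCoeff.natDegree ≤ p.natDegree := hp _
  have hqle : q.leadingCoeff.natDegree ≤ q.natDegree := hq _
  omega

theorem degree_coeff_reverse_lt {S : Type*} [Semiring S] {p : S[X][X]} (hp0 : p ≠ 0)
    (hp : ∀ i, (p.coeff i).natDegree ≤ i) (hlead : p.leadingCoeff.natDegree = p.natDegree)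
    {i : ℕ} (hi : i ≠ 0) : (p.reverse.coeff i).degree < (p.reverse.coeff 0).degree := by
  rw [coeff_zero_reverse, degree_eq_natDegree (leadingCoeff_ne_zero.mpr hp0), hlead]
  rcases le_or_gt i p.natDegree with h | h
  · rw [coeff_reverse, revAt_le h]
    refine (degree_le_of_natDegree_le (hp _)).trans_lt ?_
    exact_mod_cast (by omega : p.natDegree - i < p.natDegree)
  · rw [coeff_eq_zero_of_natDegree_lt (p.reverse_natDegree_le.trans_lt h), degree_zero]
    exact WithBot.bot_lt_coe _

theorem natDegree_of_mul_eq_trinomial {p q : R[X][X]} {h g c : R[X]} {m : ℕ} (hm : 0 < m)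
    (hsep : h.Separable) (hhg : IsCoprime h g) (hh : h.natDegree = 2 * m)
    (hp : ∀ i, (p.coeff i).natDegree ≤ i) (hq : ∀ i, (q.coeff i).natDegree ≤ i)
    (hpq : p * q = trinomial 0 m (2 * m) c g h) :
    p.natDegree = 0 ∨ p.natDegree = 2 * m ∨
      (p.natDegree = m ∧ ∃ r s : R[X], r + s = g ∧ r * s = h * c) := by
  have hm2 : m < 2 * m := by omega
  have hh0 : h ≠ 0 := by rintro rfl; rw [natDegree_zero] at hh; omega
  have hdeg : (p * q).natDegree = 2 * m := by rw [hpq, trinomial_natDegree hm hm2 hh0]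
  have hlead : (p * q).leadingCoeff.natDegree = (p * q).natDegree := by
    rw [hdeg, hpq, trinomial_leadingCoeff hm hm2 hh0, hh]
  have hpq0 : p * q ≠ 0 := by intro h0; rw [h0, natDegree_zero] at hdeg; omega
  have hplead := natDegree_leadingCoeff_of_mul hp hq hpq0 hlead
  have hqlead := natDegree_leadingCoeff_of_mul hq hp (mul_comm p q ▸ hpq0) (mul_comm p q ▸ hlead)
  have hrev : p.reverse * q.reverse = trinomial 0 m (2 * m) h g c := by
    rw [← reverse_mul_of_domain, hpq, reverse_trinomial hm hh0]
  obtain ⟨hp0, hq0⟩ := mul_ne_zero_iff.mp hpq0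
  have hadd := natDegree_mul hp0 hq0
  rcases isUnit_coeff_zero_or_of_mul_eq_trinomial hm hsep hhg
    (fun i hi ↦ degree_coeff_reverse_lt hp0 hp hplead hi) hrev with hu | hu | ⟨hpm, hqm, hrs⟩
  · rw [coeff_zero_reverse] at hu
    exact .inl (hplead ▸ natDegree_eq_zero_of_isUnit hu)
  · rw [coeff_zero_reverse] at hu
    have hq_zero := hqlead ▸ natDegree_eq_zero_of_isUnit hu
    exact .inr (.inl (by omega))
  · have := hpm.trans p.reverse_natDegree_le
    have := hqm.trans q.reverse_natDegree_le
    exact .inr (.inr ⟨by omega, hrs⟩)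

end Trinomial

section ArtinSchreier

/-- In characteristic two, the quotient of `X ^ (2 ^ k) + X` by the Artin–Schreier polynomial
`X ^ 2 + X`. The recursion avoids division; it comes from
`X ^ (2 ^ (k + 1)) + X = (X ^ (2 ^ k) + X) ^ 2 + (X ^ 2 + X)`. -/
noncomputable def artinSchreierQuot (R : Type*) [CommSemiring R] : ℕ → R[X]
  | 0 => 0
  | k + 1 => (X ^ 2 + X) * artinSchreierQuot R k ^ 2 + 1

section CommRing

variable {R : Type*} [CommRing R] [CharP R 2]

theorem artinSchreier_mul_artinSchreierQuot (k : ℕ) :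
    (X ^ 2 + X) * artinSchreierQuot R k = X ^ (2 ^ k) + X := by
  induction k with
  | zero => simp [artinSchreierQuot, CharTwo.add_self_eq_zero]
  | succ k ih =>
    calc (X ^ 2 + X) * artinSchreierQuot R (k + 1)
        = ((X ^ 2 + X) * artinSchreierQuot R k) ^ 2 + (X ^ 2 + X) := by
          rw [artinSchreierQuot]; ring
      _ = X ^ (2 ^ (k + 1)) + X + (X ^ 2 + X ^ 2) := by
          rw [ih, CharTwo.add_sq, ← pow_mul, ← pow_succ]; ring
      _ = X ^ (2 ^ (k + 1)) + X := by rw [CharTwo.add_self_eq_zero, add_zero]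

theorem artinSchreierQuot_succ (k : ℕ) :
    artinSchreierQuot R (k + 1) =
      (X ^ 2 + X) * (artinSchreierQuot R k + 1) ^ 2 + (X ^ 2 + X + 1) := by
  rw [artinSchreierQuot, CharTwo.add_sq]
  linear_combination -(X ^ 2 + X) * CharTwo.two_eq_zero (R := R[X])

theorem separable_artinSchreierQuot {k : ℕ} (hk : k ≠ 0) :
    (artinSchreierQuot R k).Separable := by
  have hsep : (X ^ (2 ^ k) - X : R[X]).Separable := galois_poly_separable 2 _ (dvd_pow_self 2 hk)
  rw [CharTwo.sub_eq_add, ← artinSchreier_mul_artinSchreierQuot] at hsep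
  exact hsep.of_mul_right

theorem isCoprime_artinSchreierQuot_add_one {k : ℕ} (hk : Even k) :
    IsCoprime (X ^ 2 + X + 1) (artinSchreierQuot R k + 1) := by
  obtain ⟨l, rfl⟩ := hk
  have hs : IsCoprime (X ^ 2 + X + 1 : R[X]) (X ^ 2 + X) := ⟨1, -1, by ring⟩
  induction l with
  | zero => simpa [artinSchreierQuot] using isCoprime_one_right
  | succ l ih =>
    have hsucc : artinSchreierQuot R (l + 1 + (l + 1)) + 1 =
        (X ^ 2 + X) * artinSchreierQuot R (l + l + 1) ^ 2 := by
      rw [show l + 1 + (l + 1) = l + l + 1 + 1 by omega, artinSchreierQuot]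
      linear_combination CharTwo.two_eq_zero (R := R[X])
    rw [hsucc, artinSchreierQuot_succ]
    refine hs.mul_right (IsCoprime.pow_right ?_)
    simpa using (hs.mul_right ih.pow_right).add_mul_left_right 1

theorem isCoprime_artinSchreierQuot_succ {k : ℕ} (hk : Even k) :
    IsCoprime (artinSchreierQuot R (k + 1)) (artinSchreierQuot R k + 1) := by
  rw [artinSchreierQuot_succ, pow_two (artinSchreierQuot R k + 1), ← mul_assoc]
  exact (isCoprime_artinSchreierQuot_add_one hk).mul_add_right_left _

end CommRing

variable {R : Type*} [CommRing R] [IsDomain R] [CharP R 2]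

theorem natDegree_artinSchreierQuot {k : ℕ} (hk : k ≠ 0) :
    (artinSchreierQuot R k).natDegree = 2 ^ k - 2 := by
  have hmul := artinSchreier_mul_artinSchreierQuot (R := R) k
  have hlt : 1 < 2 ^ k := Nat.one_lt_two_pow hk
  have hdeg : (X ^ (2 ^ k) + X : R[X]).natDegree = 2 ^ k := by
    rw [natDegree_add_eq_left_of_natDegree_lt] <;> simp [hlt]
  have h0 : (X ^ 2 + X) * artinSchreierQuot R k ≠ 0 := by
    intro h; rw [← hmul, h, natDegree_zero] at hdeg; omega
  rw [← hmul, natDegree_mul (left_ne_zero_of_mul h0) (right_ne_zero_of_mul h0)] at hdeg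
  have : (X ^ 2 + X : R[X]).natDegree = 2 := by compute_degree!
  omega

theorem le_two_of_exists_add_mul_artinSchreierQuot {a : R} (ha : a ≠ 0) {k : ℕ}
    (hk : k ≠ 0) {r s : R[X]} (hadd : r + s = C a * (artinSchreierQuot R k + 1))
    (hmul : r * s = artinSchreierQuot R (k + 1) * C (a ^ 2)) : k ≤ 2 := by
  set g := artinSchreierQuot R k + 1
  set u := r + C a * g * X
  set v := s + C a * g * X
  have huv_add : u + v = C a * g := by
    linear_combination hadd + C a * g * X * CharTwo.two_eq_zero (R := R[X])
  have huv_mul : u * v = C (a ^ 2) * (X ^ 2 + X + 1) := by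
    rw [artinSchreierQuot_succ] at hmul
    simp only [map_pow] at hmul ⊢
    linear_combination hmul + C a * g * X * hadd +
      C a ^ 2 * g ^ 2 * (X ^ 2 + X) * CharTwo.two_eq_zero (R := R[X])
  have hdeg_mul : (u * v).natDegree = 2 := by
    rw [huv_mul, natDegree_C_mul (pow_ne_zero 2 ha)]
    compute_degree!
  have hdeg_add : 2 ^ k - 2 ≤ 2 := by
    have huv : u * v ≠ 0 := by intro h; rw [h, natDegree_zero] at hdeg_mul; omega
    rw [natDegree_mul (left_ne_zero_of_mul huv) (right_ne_zero_of_mul huv)] at hdeg_mul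
    calc 2 ^ k - 2 = (u + v).natDegree := by
          rw [huv_add, natDegree_C_mul ha, show g = artinSchreierQuot R k + C 1 by rfl,
            natDegree_add_C, natDegree_artinSchreierQuot hk]
      _ ≤ max u.natDegree v.natDegree := natDegree_add_le _ _
      _ ≤ 2 := by omega
  by_contra! hlt
  have : 2 ^ 3 ≤ 2 ^ k := Nat.pow_le_pow_right two_pos hlt
  omega

end ArtinSchreier

section GoldBoundary

section Fsum

variable {R S : Type*} [CommRing R] [CommRing S]

theorem fsum_add (f g : R[X]) : fsum (f + g) = fsum f + fsum g := by
  simp only [fsum, map_add]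
  ring

theorem fsum_C_mul (c : R) (f : R[X]) : fsum (C c * f) = MvPolynomial.C c * fsum f := by
  simp only [fsum, map_mul, Polynomial.aeval_C, MvPolynomial.algebraMap_eq]
  ring

theorem map_e3 (σ : R →+* S) : MvPolynomial.map σ (e3 R) = e3 S := by
  simp [e3]

theorem map_fsum (σ : R →+* S) (f : R[X]) :
    MvPolynomial.map σ (fsum f) = fsum (f.map σ) := by
  have hmap (u : MvPolynomial (Fin 3) R) :
      MvPolynomial.map σ (aeval u f) = aeval (MvPolynomial.map σ u) (f.map σ) := by
    simp only [Polynomial.aeval_def, MvPolynomial.algebraMap_eq, Polynomial.eval₂_map,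
      Polynomial.hom_eval₂]
    congr 1
    ext; simp
  simp only [fsum, map_add, hmap, MvPolynomial.map_X]

theorem totalDegree_fsum_le (f : R[X]) : (fsum f).totalDegree ≤ f.natDegree := by
  have haeval {u : MvPolynomial (Fin 3) R} (hu : u.IsHomogeneous 1) :
      aeval u f ∈ restrictTotalDegree (Fin 3) R f.natDegree := by
    rw [mem_restrictTotalDegree]
    exact (totalDegree_aeval_polynomial_le u f).trans
      (mul_le_of_le_one_right (Nat.zero_le _) hu.totalDegree_le)
  have hX (i : Fin 3) := isHomogeneous_X R i
  rw [← mem_restrictTotalDegree]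
  exact add_mem (add_mem (add_mem (haeval (hX 0)) (haeval (hX 1))) (haeval (hX 2)))
    (haeval (((hX 0).add (hX 1)).add (hX 2)))

end Fsum

/-- The substitution `x = 0`, `y = t * T`, `z = T`, with values in the polynomials in `T` over
`R[t]`. -/
noncomputable abbrev goldRay (R : Type*) [CommSemiring R] : MvPolynomial (Fin 3) R →ₐ[R] R[X][X] :=
  aevalRay ![0, X, 1]

theorem goldRay_e3 (R : Type*) [CommRing R] :
    goldRay R (e3 R) = C (X ^ 2 + X) * X ^ 3 := by
  simp only [e3, map_mul, map_add, aevalRay_X, Matrix.cons_val_zero, Matrix.cons_val_one,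
    Matrix.cons_val, map_zero, map_one, map_pow]
  ring

theorem goldRay_e3_ne_zero (R : Type*) [CommRing R] [Nontrivial R] : goldRay R (e3 R) ≠ 0 := by
  have hmonic : (X ^ 2 + X : R[X]).Monic := by monicity!
  rw [goldRay_e3]
  exact fun h ↦ hmonic.ne_zero (Polynomial.C_eq_zero.mp (mul_X_pow_eq_zero h))

theorem e3_ne_zero (R : Type*) [CommRing R] [Nontrivial R] : e3 R ≠ 0 := fun h ↦
  goldRay_e3_ne_zero R (by rw [h, map_zero])

theorem totalDegree_e3 (R : Type*) [CommRing R] [Nontrivial R] : (e3 R).totalDegree = 3 := by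
  have hX (i : Fin 3) := isHomogeneous_X R i
  exact ((((hX 0).add (hX 1)).mul ((hX 0).add (hX 2))).mul
    ((hX 1).add (hX 2))).totalDegree (e3_ne_zero R)

theorem natDegree_coeff_goldRay_le {R : Type*} [CommSemiring R] (P : MvPolynomial (Fin 3) R)
    (i : ℕ) : ((goldRay R P).coeff i).natDegree ≤ i := by
  rw [coeff_aevalRay, ← mul_one i]
  refine MvPolynomial.aeval_natDegree_le _ ?_ _ fun j ↦ ?_
  · rw [mul_one]
    exact (homogeneousComponent_isHomogeneous i P).totalDegree_le
  · fin_cases j <;> simp [natDegree_X_le]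

theorem goldRay_fsum_X_pow (R : Type*) [CommRing R] [CharP R 2] (i j : ℕ) :
    goldRay R (fsum (X ^ (2 ^ i + 2 ^ j))) = C (X ^ 2 ^ i + X ^ 2 ^ j) * X ^ (2 ^ i + 2 ^ j) := by
  have hadd (l : ℕ) : (C X * X + X : R[X][X]) ^ 2 ^ l = (C X * X) ^ 2 ^ l + X ^ 2 ^ l :=
    add_pow_char_pow _ _ 2 l
  calc goldRay R (fsum (X ^ (2 ^ i + 2 ^ j)))
      = (C X * X) ^ (2 ^ i + 2 ^ j) + X ^ (2 ^ i + 2 ^ j) +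
          (C X * X + X) ^ (2 ^ i + 2 ^ j) := by simp [fsum]
    _ = C (X ^ 2 ^ i + X ^ 2 ^ j) * X ^ (2 ^ i + 2 ^ j) := by
      rw [pow_add (C X * X + X), hadd, hadd, map_add, map_pow, map_pow]
      linear_combination ((C X * X) ^ (2 ^ i + 2 ^ j) + X ^ (2 ^ i + 2 ^ j)) *
        CharTwo.two_eq_zero (R := R[X][X])

/-- The polynomial `x ^ (2 ^ l + 1) + a * x ^ (2 ^ (l - 1) + 2) + a ^ 2 * x ^ 3` for
`l = k + 1`; the shift avoids the truncated subtraction. -/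
noncomputable def goldBoundary {R : Type*} [CommSemiring R] (a : R) (k : ℕ) : R[X] :=
  X ^ (2 ^ (k + 1) + 1) + C a * X ^ (2 ^ k + 2) + C (a ^ 2) * X ^ 3

theorem map_goldBoundary {R S : Type*} [CommSemiring R] [CommSemiring S] (σ : R →+* S) (a : R)
    (k : ℕ) : (goldBoundary a k).map σ = goldBoundary (σ a) k := by
  simp [goldBoundary]

theorem natDegree_goldBoundary_le {R : Type*} [CommSemiring R] (a : R) (k : ℕ) :
    (goldBoundary a k).natDegree ≤ 2 ^ (k + 1) + 1 := by
  have := Nat.one_le_two_pow (n := k)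
  rw [goldBoundary]
  compute_degree
  omega

theorem goldRay_fsum_goldBoundary {R : Type*} [CommRing R] [CharP R 2] (a : R) (k : ℕ) :
    goldRay R (fsum (goldBoundary a k)) =
      C (X ^ 2 ^ (k + 1) + X) * X ^ (2 ^ (k + 1) + 1) +
        C (C a * (X ^ 2 ^ k + X ^ 2)) * X ^ (2 ^ k + 2) +
          C (C (a ^ 2) * (X ^ 2 + X)) * X ^ 3 := by
  have htop := goldRay_fsum_X_pow R (k + 1) 0
  have hmid := goldRay_fsum_X_pow R k 1
  have hbot := goldRay_fsum_X_pow R 1 0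
  norm_num only [pow_zero, pow_one] at htop hmid hbot
  simp only [goldBoundary, fsum_add, fsum_C_mul, map_add, map_mul, htop, hmid, hbot]
  simp [mul_assoc]

section Quotient

section IsDomain

variable {R : Type*} [CommRing R] [IsDomain R] {a : R} {k : ℕ} {φ P : MvPolynomial (Fin 3) R}

theorem totalDegree_le_of_e3_mul_eq_fsum (hφ : e3 R * φ = fsum (goldBoundary a k)) :
    φ.totalDegree ≤ 2 * (2 ^ k - 1) := by
  rcases eq_or_ne φ 0 with rfl | hφ0
  · simp
  have hdeg := (totalDegree_fsum_le _).trans (natDegree_goldBoundary_le a k)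
  rw [← hφ, totalDegree_mul_of_isDomain (e3_ne_zero R) hφ0, totalDegree_e3] at hdeg
  rw [pow_succ] at hdeg
  omega

variable [CharP R 2]

theorem goldRay_of_e3_mul_eq_fsum (hφ : e3 R * φ = fsum (goldBoundary a k)) :
    goldRay R φ = trinomial 0 (2 ^ k - 1) (2 * (2 ^ k - 1)) (C (a ^ 2))
      (C a * (artinSchreierQuot R k + 1)) (artinSchreierQuot R (k + 1)) := by
  refine mul_left_cancel₀ (goldRay_e3_ne_zero R) ?_
  rw [← map_mul, hφ, goldRay_fsum_goldBoundary, goldRay_e3]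
  have htop := artinSchreier_mul_artinSchreierQuot (R := R) (k + 1)
  have hmid : (X ^ 2 + X) * (artinSchreierQuot R k + 1) = X ^ 2 ^ k + X ^ 2 := by
    linear_combination artinSchreier_mul_artinSchreierQuot (R := R) k +
      X * CharTwo.two_eq_zero (R := R[X])
  obtain ⟨m, hm⟩ := Nat.exists_eq_add_of_le' (Nat.one_le_two_pow (n := k))
  rw [← htop, ← hmid, pow_succ 2 k, hm, trinomial_def]
  simp only [map_mul, Nat.add_sub_cancel]
  ring

theorem natDegree_goldRay_of_e3_mul_eq_fsum (hk : k ≠ 0)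
    (hφ : e3 R * φ = fsum (goldBoundary a k)) :
    (goldRay R φ).natDegree = 2 * (2 ^ k - 1) := by
  have hlt := Nat.one_lt_two_pow hk
  have htop := natDegree_artinSchreierQuot (R := R) k.succ_ne_zero
  rw [goldRay_of_e3_mul_eq_fsum hφ, trinomial_natDegree (by omega) (by omega)]
  intro h
  rw [h, natDegree_zero, pow_succ] at htop
  omega

theorem natDegree_goldRay_of_dvd (hk : k ≠ 0) (hφ : e3 R * φ = fsum (goldBoundary a k))
    (hP : P ∣ φ) : (goldRay R P).natDegree = P.totalDegree := by
  have hdeg := natDegree_goldRay_of_e3_mul_eq_fsum hk hφ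
  refine natDegree_aevalRay_of_dvd ?_
    ((totalDegree_le_of_e3_mul_eq_fsum hφ).trans_eq hdeg.symm) hP
  intro h
  have := Nat.one_lt_two_pow hk
  rw [h, natDegree_zero] at hdeg
  omega

theorem totalDegree_of_e3_mul_eq_fsum (hk : k ≠ 0) (hφ : e3 R * φ = fsum (goldBoundary a k)) :
    φ.totalDegree = 2 * (2 ^ k - 1) := by
  rw [← natDegree_goldRay_of_dvd hk hφ dvd_rfl, natDegree_goldRay_of_e3_mul_eq_fsum hk hφ]

end IsDomain

variable {K : Type*} [Field K] [CharP K 2] {a : K} {k : ℕ} {φ P : MvPolynomial (Fin 3) K}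

theorem totalDegree_of_dvd_of_e3_mul_eq_fsum (ha : a ≠ 0) (hk0 : k ≠ 0) (hk : Even k)
    (hφ : e3 K * φ = fsum (goldBoundary a k)) (hP : P ∣ φ) :
    P.totalDegree = 0 ∨ P.totalDegree = φ.totalDegree ∨ (P.totalDegree = 2 ^ k - 1 ∧ k = 2) := by
  have hlt := Nat.one_lt_two_pow hk0
  have hCa : IsUnit (C a) := isUnit_C.mpr ha.isUnit
  rw [← natDegree_goldRay_of_dvd hk0 hφ hP, totalDegree_of_e3_mul_eq_fsum hk0 hφ]
  obtain ⟨Q, rfl⟩ := hP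
  have hcop : IsCoprime (artinSchreierQuot K (k + 1)) (C a * (artinSchreierQuot K k + 1)) :=
    (isCoprime_mul_unit_left_right hCa _ _).mpr (isCoprime_artinSchreierQuot_succ hk)
  have hdeg : (artinSchreierQuot K (k + 1)).natDegree = 2 * (2 ^ k - 1) := by
    rw [natDegree_artinSchreierQuot k.succ_ne_zero, pow_succ]
    omega
  rcases natDegree_of_mul_eq_trinomial (by omega) (separable_artinSchreierQuot k.succ_ne_zero)
    hcop hdeg (natDegree_coeff_goldRay_le P) (natDegree_coeff_goldRay_le Q)
    (by rw [← map_mul, goldRay_of_e3_mul_eq_fsum hφ]) with h | h | ⟨h, r, s, hadd, hmul⟩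
  · exact .inl h
  · exact .inr (.inl h)
  · have hle := le_two_of_exists_add_mul_artinSchreierQuot ha hk0 hadd hmul
    exact .inr (.inr ⟨h, by grind⟩)

theorem irreducible_of_e3_mul_eq_fsum (ha : a ≠ 0) (hk0 : k ≠ 0) (hk : Even k) (hk2 : k ≠ 2)
    (hφ : e3 K * φ = fsum (goldBoundary a k)) : Irreducible φ := by
  have := Nat.one_lt_two_pow hk0
  refine irreducible_of_totalDegree_of_dvd
    (by rw [totalDegree_of_e3_mul_eq_fsum hk0 hφ]; omega) fun Q hQ ↦ ?_
  have := totalDegree_of_dvd_of_e3_mul_eq_fsum ha hk0 hk hφ hQ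
  tauto

theorem irreducible_of_dvd_of_totalDegree_eq_three (ha : a ≠ 0)
    (hφ : e3 K * φ = fsum (goldBoundary a 2)) (hP : P ∣ φ) (hdeg : P.totalDegree = 3) :
    Irreducible P := by
  have hP0 : P ≠ 0 := by rintro rfl; simp at hdeg
  refine irreducible_of_totalDegree_of_dvd (by omega) fun Q hQ ↦ ?_
  have hle : Q.totalDegree ≤ P.totalDegree := totalDegree_le_of_dvd_of_isDomain hQ hP0
  have hφdeg := totalDegree_of_e3_mul_eq_fsum two_ne_zero hφ
  have := totalDegree_of_dvd_of_e3_mul_eq_fsum ha two_ne_zero even_two hφ (hQ.trans hP)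
  omega

end Quotient

end GoldBoundary

end PolynomialNotation

section GoldCubic

variable {R : Type*} [CommRing R]

/-- The cubic `u ^ 3 + u * v ^ 2 + v ^ 3 + a` in two of the linear forms `x + y`, `x + z`: the two
cubics `goldCubic a 1 2` and `goldCubic a 2 1` are the factors of the quotient of degree six that
belongs to `goldBoundary a 2`. -/
noncomputable def goldCubic (a : R) (i j : Fin 3) : MvPolynomial (Fin 3) R :=
  (X 0 + X i) ^ 3 + (X 0 + X i) * (X 0 + X j) ^ 2 + (X 0 + X j) ^ 3 + C a

theorem map_goldCubic {S : Type*} [CommRing S] (σ : R →+* S) (a : R) (i j : Fin 3) :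
    MvPolynomial.map σ (goldCubic a i j) = goldCubic (σ a) i j := by
  simp [goldCubic]

theorem totalDegree_goldCubic_le (a : R) (i j : Fin 3) : (goldCubic a i j).totalDegree ≤ 3 := by
  have hlin (l : Fin 3) := (isHomogeneous_X R 0).add (isHomogeneous_X R l)
  refine (totalDegree_add _ _).trans (max_le ?_ (totalDegree_C a ▸ Nat.zero_le 3))
  exact ((((hlin i).pow 3).add ((hlin i).mul ((hlin j).pow 2))).add
    ((hlin j).pow 3)).totalDegree_le

theorem e3_mul_goldCubic_mul_goldCubic [CharP R 2] (a : R) :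
    e3 R * (goldCubic a 1 2 * goldCubic a 2 1) = fsum (goldBoundary a 2) := by
  simp only [e3, goldCubic, fsum, goldBoundary, map_add, map_mul, map_pow, Polynomial.aeval_X,
    Polynomial.aeval_C, MvPolynomial.algebraMap_eq]
  grind

theorem irreducible_goldCubic {K : Type*} [Field K] [CharP K 2] {a : K} (ha : a ≠ 0) :
    Irreducible (goldCubic a 1 2) ∧ Irreducible (goldCubic a 2 1) := by
  have hmul := e3_mul_goldCubic_mul_goldCubic a
  have hdeg := totalDegree_of_e3_mul_eq_fsum two_ne_zero hmul
  have hne : goldCubic a 1 2 * goldCubic a 2 1 ≠ 0 := by intro h; simp [h] at hdeg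
  rw [totalDegree_mul_of_isDomain (left_ne_zero_of_mul hne) (right_ne_zero_of_mul hne)] at hdeg
  have := totalDegree_goldCubic_le a 1 2
  have := totalDegree_goldCubic_le a 2 1
  exact ⟨irreducible_of_dvd_of_totalDegree_eq_three ha hmul (dvd_mul_right _ _) (by omega),
    irreducible_of_dvd_of_totalDegree_eq_three ha hmul (dvd_mul_left _ _) (by omega)⟩

end GoldCubic

theorem gold_degree_boundary_case_special_general {F K : Type*} [Field F] [CharP F 2] [Field K]
    [Algebra F K] {k : ℕ} (hk3 : 3 ≤ k) (hkodd : Odd k) {a : F} (ha : a ≠ 0) {f : Polynomial F}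
    (hf : f = Polynomial.X ^ (2 ^ k + 1) +
      Polynomial.C a * Polynomial.X ^ (2 ^ (k - 1) + 2) +
      Polynomial.C (a ^ 2) * Polynomial.X ^ 3)
    {φ : MvPolynomial (Fin 3) F} (hφ : e3 F * φ = fsum f) :
    Irreducible (MvPolynomial.map (algebraMap F K) φ) ∨
      ∃ P Q : MvPolynomial (Fin 3) F, φ = P * Q ∧
        Irreducible (MvPolynomial.map (algebraMap F K) P) ∧
        Irreducible (MvPolynomial.map (algebraMap F K) Q) := by
  obtain ⟨l, rfl⟩ := Nat.exists_eq_add_of_le' (show 1 ≤ k by omega)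
  have hl : Even l := by grind
  have : CharP K 2 := charP_of_injective_algebraMap (algebraMap F K).injective 2
  have hσa : algebraMap F K a ≠ 0 := (map_ne_zero _).mpr ha
  obtain rfl : f = goldBoundary a l := hf
  rcases eq_or_ne l 2 with rfl | hl2
  · refine .inr ⟨goldCubic a 1 2, goldCubic a 2 1, ?_, ?_⟩
    · exact mul_left_cancel₀ (e3_ne_zero F) (hφ.trans (e3_mul_goldCubic_mul_goldCubic a).symm)
    · simpa only [map_goldCubic] using irreducible_goldCubic hσa
  · refine .inl (irreducible_of_e3_mul_eq_fsum hσa (by omega) hl hl2 ?_)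
    rw [← map_e3 (algebraMap F K), ← map_mul, hφ, map_fsum, map_goldBoundary]

theorem gold_degree_boundary_case_special
    (n k : ℕ) (hn : 0 < n) (hk3 : 3 ≤ k) (hkodd : Odd k) (hgcd : Nat.gcd k n = 1)
    (F : Type*) [Field F] [Fintype F] (hF : Fintype.card F = 2 ^ n)
    (a : F) (ha : a ≠ 0)
    (f : Polynomial F)
    (hf : f = Polynomial.X ^ (2 ^ k + 1) +
      Polynomial.C a * Polynomial.X ^ (2 ^ (k - 1) + 2) +
      Polynomial.C (a ^ 2) * Polynomial.X ^ 3)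
    (φ : MvPolynomial (Fin 3) F) (hφ : e3 F * φ = fsum f) :
    Irreducible (MvPolynomial.map (algebraMap F (AlgebraicClosure F)) φ) ∨
      ∃ P Q : MvPolynomial (Fin 3) F, φ = P * Q ∧
        Irreducible (MvPolynomial.map (algebraMap F (AlgebraicClosure F)) P) ∧
        Irreducible (MvPolynomial.map (algebraMap F (AlgebraicClosure F)) Q) := by
  have : CharP F 2 := charP_of_card_eq_prime_pow hF
  exact gold_degree_boundary_case_special_general hk3 hkodd ha hf hφ
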